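/- Let π: (M, φ, ξ, η, g) → (M', J, g') be a contact-complex Riemannian submersion with dim M ≥ 5 and dim M' ≥ 4 whose total space is locally conformal cosymplectic, with fibres of dimension 2r+1, r ≥ 1. Then the following are equivalent: (i) π has superminimal fibres, i.e. ∇_U φ = 0 for every vertical vector field U; (ii) each fibre of π is a minimal submanifold of M and inherits from M a cosymplectic structure. -/

import Mathlib

/-!
Why the theorem holds: the explicit formula for `∇φ` on a locally conformal cosymplectic manifold
shows that both conditions amount to the vanishing of the Lee form `ω`.

* If `g(W₁, (∇_U φ)W₂) = 0` for all vertical `U, W₁, W₂`, then evaluating the formula at `U = ξ`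
  gives `ω = ω(ξ) η` on the vertical fields, and evaluating it at `(u, φu, ξ)`, with `u` a unit
  vertical field orthogonal to `ξ`, gives `ω(ξ) = 0` (`CCSub.lee_vertical`).
* Once `ω` vanishes on vertical fields, the formula and the symmetry of `T` on them give
  `g(Y, T_u u + T_{φu} φu) = 2 ω(Y)` and `g(Y, T_ξ ξ) = ω(Y)` for `Y` horizontal, so that the trace
  of `T` is `2r + 1` times the horizontal part of the Lee vector field
  (`CCSub.g_meanCurv`). Hence minimality of the fibres kills the rest of `ω`.
* If the fibres are superminimal, evaluating the formula at `(u, u, Y)` with `Y` horizontal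
  gives `ω(Y) = 0` (`CCSub.lee_of_superminimal`).

The ring `C` may have nilpotents, so `φξ = 0` need not hold: one only has `φξ = aξ` with
`a = η(φξ)`, `a² = 0`, and the computations carry `a` along.
-/


noncomputable section

/-!
Algebraic model of a contact-complex Riemannian submersion
π : (M^{2m+1}, φ, ξ, η, g) → (M'^{2n}, J, g').

Smooth functions on M (resp. M') are modelled by a commutative ℝ-algebra `C`
(resp. `C'`), vector fields on M (resp. M') by a module `V` over `C`
(resp. `V'` over `C'`).  The structure `CCSub` bundles:
* the almost contact metric structure (φ, ξ, η, g) of the total space,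
* its Levi-Civita connection `nabla`, Lie bracket and the action `D` of
  vector fields on functions,
* the vertical/horizontal projections `v`, `h` of the submersion,
* adapted orthonormal frames (used to express the traces occurring in the
  codifferentials δη, δΦ, in the Lee form and in the mean curvature of the
  fibres),
* the almost Hermitian base (J, g') with its Levi-Civita connection, and
* the differential π_* (`push`) and pull-back of functions (`pull`), with the
  Riemannian-submersion property and the contact-complex compatibility
  J ∘ π_* = π_* ∘ φ.

Conventions: dΦ(X,Y,Z) = (1/3)(XΦ(Y,Z) + YΦ(Z,X) + ZΦ(X,Y)
  - Φ([X,Y],Z) - Φ([Y,Z],X) - Φ([Z,X],Y)),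
(ω∧Φ)(X,Y,Z) = (1/3)(ω(X)Φ(Y,Z) + ω(Y)Φ(Z,X) + ω(Z)Φ(X,Y)),
dη(X,Y) = (1/2)(Xη(Y) - Yη(X) - η([X,Y])),
(η∧ω)(X,Y) = (1/2)(η(X)ω(Y) - η(Y)ω(X)),
as in the paper (which writes 3dΦ(X,Y,Z) for the 6-term sum).
-/

structure CCSub (C : Type) [CommRing C] [Algebra ℝ C]
    (V : Type) [AddCommGroup V] [Module C V]
    (C' : Type) [CommRing C'] [Algebra ℝ C']
    (V' : Type) [AddCommGroup V'] [Module C' V'] : Type where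
  /-- dim M = 2m+1 -/
  m : ℕ
  /-- dim M' = 2n -/
  n : ℕ
  /-- the fibres have dimension 2r+1 -/
  r : ℕ
  dim_eq : m = n + r
  -- the Riemannian metric of M
  g : V → V → C
  g_symm : ∀ X Y, g X Y = g Y X
  g_add_left : ∀ X Y Z, g (X + Y) Z = g X Z + g Y Z
  g_smul_left : ∀ (a : C) (X Y : V), g (a • X) Y = a * g X Y
  -- the almost contact structure
  phi : V → V
  phi_add : ∀ X Y, phi (X + Y) = phi X + phi Y
  phi_smul : ∀ (a : C) (X : V), phi (a • X) = a • phi X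
  xi : V
  eta : V → C
  eta_eq : ∀ X, eta X = g X xi
  acm_phi_phi : ∀ X, phi (phi X) = -X + eta X • xi
  acm_eta_xi : eta xi = 1
  acm_compat : ∀ X Y, g (phi X) (phi Y) = g X Y - eta X * eta Y
  -- derivations, Lie bracket and the Levi-Civita connection of M
  D : V → C → C
  D_add : ∀ X (a b : C), D X (a + b) = D X a + D X b
  D_mul : ∀ X (a b : C), D X (a * b) = D X a * b + a * D X b
  D_add_left : ∀ X Y (a : C), D (X + Y) a = D X a + D Y a
  D_smul_left : ∀ (a : C) X (b : C), D (a • X) b = a * D X b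
  bracket : V → V → V
  nabla : V → V → V
  nabla_add_left : ∀ X Y Z, nabla (X + Y) Z = nabla X Z + nabla Y Z
  nabla_smul_left : ∀ (a : C) X Y, nabla (a • X) Y = a • nabla X Y
  nabla_add_right : ∀ X Y Z, nabla X (Y + Z) = nabla X Y + nabla X Z
  nabla_leibniz : ∀ X (a : C) Y, nabla X (a • Y) = D X a • Y + a • nabla X Y
  torsion_free : ∀ X Y, bracket X Y = nabla X Y - nabla Y X
  metric_compat : ∀ X Y Z, D X (g Y Z) = g (nabla X Y) Z + g Y (nabla X Z)
  -- vertical and horizontal projections of the submersion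
  v : V → V
  h : V → V
  v_add : ∀ X Y, v (X + Y) = v X + v Y
  v_smul : ∀ (a : C) X, v (a • X) = a • v X
  h_eq : ∀ X, h X = X - v X
  v_idem : ∀ X, v (v X) = v X
  vh_orth : ∀ X Y, g (v X) (h Y) = 0
  xi_vertical : v xi = xi
  phi_vertical : ∀ X, v (phi (v X)) = phi (v X)
  phi_horizontal : ∀ X, v (phi (h X)) = 0
  bracket_vertical : ∀ X Y, v (bracket (v X) (v Y)) = bracket (v X) (v Y)
  -- a global orthonormal frame of M, used to express traces
  frame : Fin (2 * m + 1) → V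
  frame_orthonormal : ∀ i j, g (frame i) (frame j) = if i = j then 1 else 0
  frame_complete : ∀ X, X = ∑ i, g X (frame i) • frame i
  -- an adapted vertical frame {u_1,...,u_r, φu_1,...,φu_r, ξ}
  u : Fin r → V
  u_vertical : ∀ i, v (u i) = u i
  u_orthonormal : ∀ i j, g (u i) (u j) = if i = j then 1 else 0
  u_phi_orth : ∀ i j, g (u i) (phi (u j)) = 0
  u_eta : ∀ i, eta (u i) = 0
  u_complete : ∀ X,
    v X = (∑ i, g X (u i) • u i) + (∑ i, g X (phi (u i)) • phi (u i)) + eta X • xi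
  -- the almost Hermitian base (M', J, g')
  g' : V' → V' → C'
  g'_symm : ∀ X Y, g' X Y = g' Y X
  J : V' → V'
  J_J : ∀ X, J (J X) = -X
  J_compat : ∀ X Y, g' (J X) (J Y) = g' X Y
  D' : V' → C' → C'
  bracket' : V' → V' → V'
  nabla' : V' → V' → V'
  torsion_free' : ∀ X Y, bracket' X Y = nabla' X Y - nabla' Y X
  metric_compat' : ∀ X Y Z, D' X (g' Y Z) = g' (nabla' X Y) Z + g' Y (nabla' X Z)
  frame' : Fin (2 * n) → V'
  frame'_orthonormal : ∀ i j, g' (frame' i) (frame' j) = if i = j then 1 else 0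
  frame'_complete : ∀ X, X = ∑ i, g' X (frame' i) • frame' i
  -- the submersion π : pull-back of functions and push-forward π_*
  pull : C' →+* C
  pull_algebraMap : ∀ x : ℝ, pull (algebraMap ℝ C' x) = algebraMap ℝ C x
  push : V → V'
  push_add : ∀ X Y, push (X + Y) = push X + push Y
  push_vertical : ∀ X, push (v X) = 0
  push_isometry : ∀ X Y, pull (g' (push X) (push Y)) = g (h X) (h Y)
  /-- the defining property of a contact-complex submersion: J ∘ π_* = π_* ∘ φ -/
  contact_complex : ∀ X, push (phi X) = J (push X)

namespace CCSub

variable {C : Type} [CommRing C] [Algebra ℝ C] {V : Type} [AddCommGroup V] [Module C V]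
  {C' : Type} [CommRing C'] [Algebra ℝ C'] {V' : Type} [AddCommGroup V'] [Module C' V']

variable (S : CCSub C V C' V')

/-- `X` is a horizontal vector field. -/
def Horizontal (X : V) : Prop := S.v X = 0

/-- `X` is a vertical vector field. -/
def Vertical (X : V) : Prop := S.v X = X

/-- `X` is a basic (projectable horizontal) vector field. -/
def Basic (X : V) : Prop :=
  S.v X = 0 ∧ ∀ a : C', S.D X (S.pull a) = S.pull (S.D' (S.push X) a)

/-- The fundamental 2-form Φ(X,Y) = g(X, φY). -/
def Phi (X Y : V) : C := S.g X (S.phi Y)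

/-- The O'Neill tensor T: T_E F = h∇_{vE} vF + v∇_{vE} hF. -/
def T (E F : V) : V := S.h (S.nabla (S.v E) (S.v F)) + S.v (S.nabla (S.v E) (S.h F))

/-- The O'Neill tensor A: A_E F = h∇_{hE} vF + v∇_{hE} hF. -/
def A (E F : V) : V := S.h (S.nabla (S.h E) (S.v F)) + S.v (S.nabla (S.h E) (S.h F))

/-- The covariant derivative (∇_X φ)Y. -/
def nablaPhi (X Y : V) : V := S.nabla X (S.phi Y) - S.phi (S.nabla X Y)

/-- (∇_X Φ)(Y,Z) = g(Y, (∇_X φ)Z). -/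
def nablaPhiForm (X Y Z : V) : C := S.g Y (S.nablaPhi X Z)

/-- The Nijenhuis tensor of φ. -/
def Nphi (X Y : V) : V :=
  S.phi (S.phi (S.bracket X Y)) + S.bracket (S.phi X) (S.phi Y)
    - S.phi (S.bracket X (S.phi Y)) - S.phi (S.bracket (S.phi X) Y)

/-- The exterior differential dΦ. -/
def dPhi (X Y Z : V) : C :=
  algebraMap ℝ C (1/3) *
    (S.D X (S.Phi Y Z) + S.D Y (S.Phi Z X) + S.D Z (S.Phi X Y)
      - S.Phi (S.bracket X Y) Z - S.Phi (S.bracket Y Z) X - S.Phi (S.bracket Z X) Y)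

/-- The exterior differential of a 1-form on M. -/
def dOne (α : V → C) (X Y : V) : C :=
  algebraMap ℝ C (1/2) * (S.D X (α Y) - S.D Y (α X) - α (S.bracket X Y))

/-- dη. -/
def dEta (X Y : V) : C := S.dOne S.eta X Y

/-- The wedge product α ∧ Φ of a 1-form with the fundamental 2-form. -/
def wedgePhi (α : V → C) (X Y Z : V) : C :=
  algebraMap ℝ C (1/3) * (α X * S.Phi Y Z + α Y * S.Phi Z X + α Z * S.Phi X Y)

/-- The wedge product of two 1-forms on M. -/
def wedgeOne (_S : CCSub C V C' V') (α β : V → C) (X Y : V) : C :=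
  algebraMap ℝ C (1/2) * (α X * β Y - α Y * β X)

/-- The codifferential δη = -Σ g(∇_{e_i} ξ, e_i). -/
def deltaEta : C := -(∑ i, S.g (S.nabla (S.frame i) S.xi) (S.frame i))

/-- The 1-form δΦ, δΦ(Z) = Σ g((∇_{e_i} φ)e_i, Z). -/
def deltaPhiForm (Z : V) : C := ∑ i, S.g (S.nablaPhi (S.frame i) (S.frame i)) Z

/-- The Lee form of M (m ≥ 2): ω = -(1/(2(m-1)))(δΦ∘φ + ∇_ξη) + (δη/(2m))η,
using (∇_ξη)(X) = g(X, ∇_ξξ). -/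
def lee (X : V) : C :=
  algebraMap ℝ C (-(1:ℝ) / (2 * ((S.m : ℝ) - 1))) *
      (S.deltaPhiForm (S.phi X) + S.g X (S.nabla S.xi S.xi))
    + algebraMap ℝ C (1 / (2 * (S.m : ℝ))) * (S.deltaEta * S.eta X)

/-- The Lee vector field B = ω^♯. -/
def leeVF : V := ∑ i, S.lee (S.frame i) • S.frame i

/-- The condition dΦ = -2 ω ∧ Φ, ω being the Lee form of M. -/
def LeeCond : Prop := ∀ X Y Z, S.dPhi X Y Z = (-2 : C) * S.wedgePhi S.lee X Y Z

/-! ### The base space (M', J, g') -/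

/-- The fundamental form Ω(X,Y) = g'(X, JY) of the base. -/
def Omega (X Y : V') : C' := S.g' X (S.J Y)

/-- (∇'_X J)Y on the base. -/
def nablaJ (X Y : V') : V' := S.nabla' X (S.J Y) - S.J (S.nabla' X Y)

/-- The Nijenhuis tensor of J. -/
def NJ (X Y : V') : V' :=
  S.J (S.J (S.bracket' X Y)) + S.bracket' (S.J X) (S.J Y)
    - S.J (S.bracket' X (S.J Y)) - S.J (S.bracket' (S.J X) Y)

/-- The exterior differential dΩ. -/
def dOmega (X Y Z : V') : C' :=
  algebraMap ℝ C' (1/3) *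
    (S.D' X (S.Omega Y Z) + S.D' Y (S.Omega Z X) + S.D' Z (S.Omega X Y)
      - S.Omega (S.bracket' X Y) Z - S.Omega (S.bracket' Y Z) X - S.Omega (S.bracket' Z X) Y)

/-- The exterior differential of a 1-form on M'. -/
def dOne' (α : V' → C') (X Y : V') : C' :=
  algebraMap ℝ C' (1/2) * (S.D' X (α Y) - S.D' Y (α X) - α (S.bracket' X Y))

/-- The wedge product β ∧ Ω on the base. -/
def wedgeOmega (α : V' → C') (X Y Z : V') : C' :=
  algebraMap ℝ C' (1/3) * (α X * S.Omega Y Z + α Y * S.Omega Z X + α Z * S.Omega X Y)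

/-- The 1-form δΩ on the base. -/
def deltaOmegaForm (Z : V') : C' := ∑ i, S.g' (S.nablaJ (S.frame' i) (S.frame' i)) Z

/-- The Lee form of the base (n ≥ 2): β = -(1/(2(n-1))) δΩ∘J. -/
def lee' (X : V') : C' :=
  algebraMap ℝ C' (-(1:ℝ) / (2 * ((S.n : ℝ) - 1))) * S.deltaOmegaForm (S.J X)

/-- The base is Kähler: ∇'J = 0. -/
def Kaehler : Prop := ∀ X Y, S.nabla' X (S.J Y) = S.J (S.nabla' X Y)

/-- The base is almost Kähler: dΩ = 0. -/
def AlmostKaehler : Prop := ∀ X Y Z, S.dOmega X Y Z = 0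

/-- The base belongs to the Gray–Hervella class W₂ ⊕ W₄: dΩ = -2 β ∧ Ω. -/
def W2W4 : Prop := ∀ X Y Z, S.dOmega X Y Z = (-2 : C') * S.wedgeOmega S.lee' X Y Z

/-- The base belongs to the Gray–Hervella class W₄: J integrable and dΩ = -2 β ∧ Ω. -/
def W4 : Prop := (∀ X Y, S.NJ X Y = 0) ∧ S.W2W4

/-- The base is locally conformal almost Kähler: it is a W₂ ⊕ W₄-manifold with
closed Lee form. -/
def LCAlmostKaehler : Prop := S.W2W4 ∧ ∀ X Y, S.dOne' S.lee' X Y = 0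

/-- The base is locally conformal Kähler:
(∇'_X Ω)(Y,Z) = β(Y)Ω(X,Z) - β(Z)Ω(X,Y) + β(JY)g'(X,Z) - β(JZ)g'(X,Y),
with closed Lee form β. -/
def LCKaehler : Prop :=
  (∀ X Y Z, S.g' Y (S.nablaJ X Z) =
      S.lee' Y * S.Omega X Z - S.lee' Z * S.Omega X Y
        + S.lee' (S.J Y) * S.g' X Z - S.lee' (S.J Z) * S.g' X Y)
    ∧ ∀ X Y, S.dOne' S.lee' X Y = 0

/-! ### The fibres -/

/-- The covariant derivative (∇̂_U φ̂)W of the induced structure on the fibres,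
∇̂ being the induced connection v ∘ ∇. -/
def vNablaPhi (U W : V) : V := S.v (S.nabla U (S.phi W)) - S.phi (S.v (S.nabla U W))

/-- The codifferential δ̂η̂ of the fibres. -/
def deltaHatEta : C :=
  -((∑ i, S.g (S.v (S.nabla (S.u i) S.xi)) (S.u i))
    + ∑ i, S.g (S.v (S.nabla (S.phi (S.u i)) S.xi)) (S.phi (S.u i)))

/-- The 1-form δ̂Φ̂ of the fibres. -/
def deltaHatPhiForm (Z : V) : C :=
  (∑ i, S.g (S.vNablaPhi (S.u i) (S.u i)) Z)
    + (∑ i, S.g (S.vNablaPhi (S.phi (S.u i)) (S.phi (S.u i))) Z)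
    + S.g (S.vNablaPhi S.xi S.xi) Z

/-- The Lee form ω̂ of the fibres (r ≥ 2). -/
def leeHat (U : V) : C :=
  algebraMap ℝ C (-(1:ℝ) / (2 * ((S.r : ℝ) - 1))) *
      (S.deltaHatPhiForm (S.phi U) + S.g U (S.v (S.nabla S.xi S.xi)))
    + algebraMap ℝ C (1 / (2 * (S.r : ℝ))) * (S.deltaHatEta * S.eta U)

/-- The Lee form ω̂ of 3-dimensional fibres (r = 1): ω̂ = ∇̂_ξη̂ + (δ̂η̂/2)η̂. -/
def leeHat1 (U : V) : C :=
  S.g U (S.v (S.nabla S.xi S.xi)) + algebraMap ℝ C (1/2) * (S.deltaHatEta * S.eta U)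

/-- The trace of T on the fibres (the unnormalized mean curvature vector
N = Σ (T_{u_i}u_i + T_{φu_i}φu_i) + T_ξξ of the fibres). -/
def meanCurv : V :=
  (∑ i, (S.T (S.u i) (S.u i) + S.T (S.phi (S.u i)) (S.phi (S.u i)))) + S.T S.xi S.xi

/-! ### Classes of almost contact metric structures on the total space -/

/-- M is almost cosymplectic: dΦ = 0 and dη = 0. -/
def AlmostCosymplectic : Prop :=
  (∀ X Y Z, S.dPhi X Y Z = 0) ∧ ∀ X Y, S.dEta X Y = 0

/-- M is normal: N_φ + 2dη ⊗ ξ = 0. -/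
def Normal : Prop := ∀ X Y, S.Nphi X Y + ((2 : C) * S.dEta X Y) • S.xi = 0

/-- M is quasi-Sasakian: dΦ = 0 and M normal. -/
def QuasiSasakian : Prop := (∀ X Y Z, S.dPhi X Y Z = 0) ∧ S.Normal

/-- M is α-Sasakian: (∇_X φ)Y = α(g(φX,Y)ξ - η(Y)X). -/
def AlphaSasakian (a : ℝ) : Prop :=
  ∀ X Y, S.nablaPhi X Y = algebraMap ℝ C a • (S.g (S.phi X) Y • S.xi - S.eta Y • X)

/-- M is α-Kenmotsu: (∇_X φ)Y = α(g(φX,Y)ξ - η(Y)φX). -/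
def AlphaKenmotsu (a : ℝ) : Prop :=
  ∀ X Y, S.nablaPhi X Y = algebraMap ℝ C a • (S.g (S.phi X) Y • S.xi - S.eta Y • S.phi X)

/-- M is a C₁₂-manifold: (∇_X φ)Y = -η(X)((∇_ξη)(φY)ξ + η(Y)φ(∇_ξξ)). -/
def C12 : Prop :=
  ∀ X Y, S.nablaPhi X Y =
    -(S.eta X) • (S.g (S.phi Y) (S.nabla S.xi S.xi) • S.xi
      + S.eta Y • S.phi (S.nabla S.xi S.xi))

/-- M is locally conformal almost cosymplectic: dΦ = -2ω∧Φ and dη = η∧ω,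
ω being the Lee form. -/
def LCAlmostCosymplectic : Prop :=
  S.LeeCond ∧ ∀ X Y, S.dEta X Y = S.wedgeOne S.eta S.lee X Y

/-- M is locally conformal cosymplectic:
(∇_X Φ)(Y,Z) = ω(Y)Φ(X,Z) - ω(Z)Φ(X,Y) + ω(φY)g(X,Z) - ω(φZ)g(X,Y). -/
def LCCosymplectic : Prop :=
  ∀ X Y Z, S.nablaPhiForm X Y Z =
    S.lee Y * S.Phi X Z - S.lee Z * S.Phi X Y
      + S.lee (S.phi Y) * S.g X Z - S.lee (S.phi Z) * S.g X Y

/-- M belongs to the Chinea–Gonzalez class C₄ ⊕ C₆ ⊕ C₇: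
M is normal and dΦ = -2ω∧Φ. -/
def ClassC4C6C7 : Prop := S.Normal ∧ S.LeeCond

/-! ### Classes of the structures induced on the fibres -/

/-- The fibres inherit an almost cosymplectic structure. -/
def FibreAlmostCosymplectic : Prop :=
  (∀ U W₁ W₂, S.Vertical U → S.Vertical W₁ → S.Vertical W₂ → S.dPhi U W₁ W₂ = 0)
    ∧ ∀ U W, S.Vertical U → S.Vertical W → S.dEta U W = 0

/-- The fibres inherit a quasi-Sasakian structure. -/
def FibreQuasiSasakian : Prop :=
  (∀ U W₁ W₂, S.Vertical U → S.Vertical W₁ → S.Vertical W₂ → S.dPhi U W₁ W₂ = 0)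
    ∧ ∀ U W, S.Vertical U → S.Vertical W →
        S.Nphi U W + ((2 : C) * S.dEta U W) • S.xi = 0

/-- The fibres inherit a cosymplectic structure: ∇̂φ̂ = 0. -/
def FibreCosymplectic : Prop :=
  ∀ U W, S.Vertical U → S.Vertical W → S.vNablaPhi U W = 0

/-- The fibres inherit an α-Sasakian structure. -/
def FibreAlphaSasakian (a : ℝ) : Prop :=
  ∀ U W, S.Vertical U → S.Vertical W →
    S.vNablaPhi U W = algebraMap ℝ C a • (S.g (S.phi U) W • S.xi - S.eta W • U)

/-- The fibres inherit a C₁₂-structure. -/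
def FibreC12 : Prop :=
  ∀ U W, S.Vertical U → S.Vertical W →
    S.vNablaPhi U W =
      -(S.eta U) • (S.g (S.phi W) (S.v (S.nabla S.xi S.xi)) • S.xi
        + S.eta W • S.phi (S.v (S.nabla S.xi S.xi)))

/-- The fibres inherit a locally conformal almost cosymplectic structure
(their Lee form being ω̂). -/
def FibreLCAlmostCosymplectic : Prop :=
  (∀ U W₁ W₂, S.Vertical U → S.Vertical W₁ → S.Vertical W₂ →
    S.dPhi U W₁ W₂ = (-2 : C) * S.wedgePhi S.leeHat U W₁ W₂)
    ∧ ∀ U W, S.Vertical U → S.Vertical W → S.dEta U W = S.wedgeOne S.eta S.leeHat U W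

/-- The fibres inherit a locally conformal cosymplectic structure
(their Lee form being ω̂). -/
def FibreLCCosymplectic : Prop :=
  ∀ U W₁ W₂, S.Vertical U → S.Vertical W₁ → S.Vertical W₂ →
    S.g W₁ (S.vNablaPhi U W₂) =
      S.leeHat W₁ * S.Phi U W₂ - S.leeHat W₂ * S.Phi U W₁
        + S.leeHat (S.phi W₁) * S.g U W₂ - S.leeHat (S.phi W₂) * S.g U W₁

/-- The 3-dimensional fibres fall in the Chinea–Gonzalez class C₉ ⊕ C₁₂
(within the class C₅ ⊕ C₆ ⊕ C₉ ⊕ C₁₂ of all 3-dimensional almost contact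
metric manifolds, this means that the C₅- and C₆-components vanish, i.e.
δ̂η̂ = 0 and δ̂Φ̂(ξ̂) = 0). -/
def FibreC9C12 : Prop := S.deltaHatEta = 0 ∧ S.deltaHatPhiForm S.xi = 0

/-- The 3-dimensional fibres fall in the class C₆:
(∇̂_U Φ̂)(V,W) = (δ̂Φ̂(ξ̂)/2)(ĝ(U,W)η̂(V) - ĝ(U,V)η̂(W)). -/
def FibreC6 : Prop :=
  ∀ U W₁ W₂, S.Vertical U → S.Vertical W₁ → S.Vertical W₂ →
    S.g W₁ (S.vNablaPhi U W₂) =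
      algebraMap ℝ C (1/2) *
        (S.deltaHatPhiForm S.xi * (S.g U W₂ * S.eta W₁ - S.g U W₁ * S.eta W₂))

/-- The fibres inherit a C₄ ⊕ C₆ ⊕ C₇-structure: they are normal and satisfy
dΦ̂ = -2ω̂ ∧ Φ̂. -/
def FibreC4C6C7 : Prop :=
  (∀ U W, S.Vertical U → S.Vertical W →
    S.Nphi U W + ((2 : C) * S.dEta U W) • S.xi = 0)
    ∧ ∀ U W₁ W₂, S.Vertical U → S.Vertical W₁ → S.Vertical W₂ →
        S.dPhi U W₁ W₂ = (-2 : C) * S.wedgePhi S.leeHat U W₁ W₂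

/-- π has superminimal fibres: ∇_U φ = 0 for every vertical U. -/
def Superminimal : Prop := ∀ U E, S.Vertical U → S.nablaPhi U E = 0

/-- The fibres of π are totally umbilical submanifolds of M:
T_U W = ĝ(U,W)·H for the mean curvature vector field H. -/
def TotallyUmbilicalFibres : Prop :=
  ∃ H : V, S.v H = 0 ∧ ∀ U W, S.Vertical U → S.Vertical W → S.T U W = S.g U W • H

end CCSub

namespace CCSub

variable {C : Type} [CommRing C] [Algebra ℝ C] {V : Type} [AddCommGroup V] [Module C V]
  {C' : Type} [CommRing C'] [Algebra ℝ C'] {V' : Type} [AddCommGroup V'] [Module C' V']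

variable (S : CCSub C V C' V')

/-! ### Linearity -/

lemma g_add_right (X Y Z : V) : S.g X (Y + Z) = S.g X Y + S.g X Z := by
  rw [S.g_symm, S.g_add_left, S.g_symm Y, S.g_symm Z]

lemma g_smul_right (a : C) (X Y : V) : S.g X (a • Y) = a * S.g X Y := by
  rw [S.g_symm, S.g_smul_left, S.g_symm Y]

lemma g_neg_left (X Y : V) : S.g (-X) Y = -S.g X Y := by
  rw [← neg_one_smul C X, S.g_smul_left, neg_one_mul]

lemma g_neg_right (X Y : V) : S.g X (-Y) = -S.g X Y := by
  rw [S.g_symm, S.g_neg_left, S.g_symm]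

lemma g_sub_right (X Y Z : V) : S.g X (Y - Z) = S.g X Y - S.g X Z := by
  rw [sub_eq_add_neg, S.g_add_right, S.g_neg_right, sub_eq_add_neg]

lemma g_zero_right (X : V) : S.g X 0 = 0 := by
  rw [← zero_smul C (0 : V), S.g_smul_right, zero_mul]

lemma g_sum_right {ι : Type} (s : Finset ι) (X : V) (f : ι → V) :
    S.g X (∑ i ∈ s, f i) = ∑ i ∈ s, S.g X (f i) := by
  classical
  induction s using Finset.induction_on with
  | empty => simp [S.g_zero_right]
  | insert i s hi ih => rw [Finset.sum_insert hi, Finset.sum_insert hi, S.g_add_right, ih]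

lemma phi_sub (X Y : V) : S.phi (X - Y) = S.phi X - S.phi Y := by
  rw [sub_eq_add_neg, S.phi_add, ← neg_one_smul C Y, S.phi_smul, neg_one_smul, ← sub_eq_add_neg]

lemma v_sub (X Y : V) : S.v (X - Y) = S.v X - S.v Y := by
  rw [sub_eq_add_neg, S.v_add, ← neg_one_smul C Y, S.v_smul, neg_one_smul, ← sub_eq_add_neg]

lemma v_zero : S.v 0 = 0 := by simpa using S.v_sub 0 0

lemma nabla_zero_right (X : V) : S.nabla X 0 = 0 := by
  simpa using S.nabla_add_right X 0 0

lemma lee_add (X Y : V) : S.lee (X + Y) = S.lee X + S.lee Y := by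
  simp only [lee, deltaPhiForm, S.phi_add, S.g_add_right, S.g_add_left, S.eta_eq,
    Finset.sum_add_distrib]
  ring

lemma lee_smul (a : C) (X : V) : S.lee (a • X) = a * S.lee X := by
  simp only [lee, deltaPhiForm, S.phi_smul, S.g_smul_right, S.g_smul_left, S.eta_eq,
    ← Finset.mul_sum]
  ring

lemma lee_neg (X : V) : S.lee (-X) = -S.lee X := by
  rw [← neg_one_smul C X, S.lee_smul, neg_one_mul]

/-- The metric is nondegenerate, because of the complete frame. -/
lemma eq_zero_of_g {X : V} (hX : ∀ Y, S.g Y X = 0) : X = 0 := by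
  rw [S.frame_complete X]
  simp [S.g_symm X, hX]

/-! ### The almost contact structure and the splitting into vertical and horizontal fields -/

/-- In place of `η ∘ φ = 0`, which may fail when `C` has nilpotents. -/
lemma eta_phi (Z : V) : S.eta (S.phi Z) = S.eta (S.phi S.xi) * S.eta Z := by
  -- compute `φ³ Z` in two ways
  have h1 := S.acm_phi_phi (S.phi Z)
  rw [S.acm_phi_phi Z, S.phi_add, S.phi_smul, ← neg_one_smul C Z, S.phi_smul, neg_one_smul] at h1
  have h2 := congrArg S.eta (add_left_cancel h1)
  rw [S.eta_eq (S.eta Z • _), S.eta_eq (S.eta (S.phi Z) • _), S.g_smul_left, S.g_smul_left,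
    ← S.eta_eq, ← S.eta_eq, S.acm_eta_xi] at h2
  linear_combination -h2

lemma phi_xi : S.phi S.xi = S.eta (S.phi S.xi) • S.xi := by
  have h1 := S.acm_phi_phi (S.phi S.xi)
  rw [S.acm_phi_phi S.xi, S.phi_add, S.phi_smul, ← neg_one_smul C S.xi, S.phi_smul,
    neg_one_smul] at h1
  simpa [S.acm_eta_xi] using add_left_cancel h1

lemma eta_phi_xi_sq : S.eta (S.phi S.xi) * S.eta (S.phi S.xi) = 0 := by
  rw [← S.eta_phi, S.acm_phi_phi, S.acm_eta_xi, S.eta_eq]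
  simpa [S.g_symm] using S.g_zero_right S.xi

lemma g_xi_phi (Z : V) : S.g S.xi (S.phi Z) = S.eta (S.phi S.xi) * S.eta Z := by
  rw [S.g_symm, ← S.eta_eq, S.eta_phi]

lemma g_vertical_horizontal {U Y : V} (hU : S.v U = U) (hY : S.v Y = 0) : S.g U Y = 0 := by
  have := S.vh_orth U Y
  rwa [hU, S.h_eq, hY, sub_zero] at this

lemma eta_horizontal {Y : V} (hY : S.v Y = 0) : S.eta Y = 0 := by
  rw [S.eta_eq, S.g_symm, S.g_vertical_horizontal S.xi_vertical hY]

lemma v_h (X : V) : S.v (S.h X) = 0 := by rw [S.h_eq, S.v_sub, S.v_idem, sub_self]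

lemma v_phi (X : V) : S.v (S.phi X) = S.phi (S.v X) := by
  have h1 := S.phi_horizontal X
  rw [S.h_eq, S.phi_sub, S.v_sub, S.phi_vertical] at h1
  exact sub_eq_zero.mp h1

lemma v_phi_vertical {U : V} (hU : S.v U = U) : S.v (S.phi U) = S.phi U := by
  rw [S.v_phi, hU]

lemma v_phi_horizontal {Y : V} (hY : S.v Y = 0) : S.v (S.phi Y) = 0 := by
  have := S.phi_horizontal Y
  rwa [S.h_eq, hY, sub_zero] at this

lemma phi_phi_horizontal {Y : V} (hY : S.v Y = 0) : S.phi (S.phi Y) = -Y := by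
  rw [S.acm_phi_phi, S.eta_horizontal hY, zero_smul, add_zero]

lemma g_phi_right {Y : V} (hY : S.v Y = 0) (Z : V) : S.g Y (S.phi Z) = -S.g (S.phi Y) Z := by
  have h1 := S.acm_compat Y (S.phi Z)
  have h2 := S.eta_phi Y
  rw [S.acm_phi_phi, S.g_add_right, S.g_neg_right, S.g_smul_right, ← S.eta_eq,
    S.eta_horizontal hY] at h1
  rw [S.eta_horizontal hY] at h2
  linear_combination -h1 + S.eta Z * h2

lemma g_horizontal_h {Y : V} (hY : S.v Y = 0) (Z : V) : S.g Y (S.h Z) = S.g Y Z := by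
  rw [S.h_eq, S.g_sub_right, S.g_symm Y (S.v Z), S.g_vertical_horizontal (S.v_idem Z) hY, sub_zero]

lemma g_vertical_v {W : V} (hW : S.v W = W) (Z : V) : S.g W (S.v Z) = S.g W Z := by
  have := S.g_vertical_horizontal hW (S.v_h Z)
  rw [S.h_eq, S.g_sub_right] at this
  linear_combination -this

lemma vNablaPhi_eq (U W : V) : S.vNablaPhi U W = S.v (S.nablaPhi U W) := by
  rw [vNablaPhi, nablaPhi, S.v_sub, S.v_phi]

lemma T_vertical {U W : V} (hU : S.v U = U) (hW : S.v W = W) :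
    S.T U W = S.h (S.nabla U W) := by
  rw [T, hU, hW, S.h_eq W, hW, sub_self, S.nabla_zero_right, S.v_zero, add_zero]

/-- The fibres are integral manifolds, so `T` is symmetric on vertical fields. -/
lemma g_nabla_comm {U W Y : V} (hU : S.v U = U) (hW : S.v W = W) (hY : S.v Y = 0) :
    S.g Y (S.nabla U W) = S.g Y (S.nabla W U) := by
  have hb := S.bracket_vertical U W
  rw [hU, hW] at hb
  have h1 := S.g_vertical_horizontal hb hY
  rw [S.g_symm, S.torsion_free, S.g_sub_right] at h1
  exact sub_eq_zero.mp h1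

lemma v_meanCurv : S.v S.meanCurv = 0 := by
  have hT : ∀ {U : V}, S.v U = U → S.v (S.T U U) = 0 := fun hU => by
    rw [S.T_vertical hU hU, S.v_h]
  let vHom : V →+ V := ⟨⟨S.v, S.v_zero⟩, S.v_add⟩
  rw [meanCurv, S.v_add, hT S.xi_vertical, add_zero]
  refine (map_sum vHom _ _).trans (Finset.sum_eq_zero fun i _ => ?_)
  change S.v _ = 0
  rw [S.v_add, hT (S.u_vertical i), hT (S.v_phi_vertical (S.u_vertical i)), add_zero]

lemma g_horizontal_h_meanCurv (Y : V) : S.g (S.h Y) S.meanCurv = S.g Y S.meanCurv := by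
  rw [S.g_symm, S.g_horizontal_h S.v_meanCurv, S.g_symm]

/-! ### The Lee form -/

variable {S}

lemma lee_formula (hlc : S.LCCosymplectic) (X Y Z : V) :
    S.g Y (S.nablaPhi X Z) =
      S.lee Y * S.g X (S.phi Z) - S.lee Z * S.g X (S.phi Y)
        + S.lee (S.phi Y) * S.g X Z - S.lee (S.phi Z) * S.g X Y :=
  hlc X Y Z

/-- The Lee form vanishes on vertical fields if the vertical part of `∇φ` vanishes on them, which
is the case when the fibres are superminimal and also when they are cosymplectic. -/
lemma lee_vertical (hfib : 1 ≤ S.r) (hlc : S.LCCosymplectic)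
    (hz : ∀ U W₁ W₂, S.v U = U → S.v W₁ = W₁ → S.v W₂ = W₂ → S.g W₁ (S.nablaPhi U W₂) = 0)
    {W : V} (hW : S.v W = W) : S.lee W = 0 := by
  have ha2 := S.eta_phi_xi_sq
  have hxx : S.g S.xi S.xi = 1 := by rw [← S.eta_eq, S.acm_eta_xi]
  have hlx : S.lee (S.phi S.xi) = S.eta (S.phi S.xi) * S.lee S.xi := by
    rw [S.phi_xi, S.lee_smul, ← S.phi_xi]
  -- the formula at `(ξ, Y, ξ)`
  have key : ∀ {Y : V}, S.v Y = Y → S.eta (S.phi S.xi) * S.lee Y + S.lee (S.phi Y)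
      = 2 * S.eta (S.phi S.xi) * S.lee S.xi * S.eta Y := fun {Y} hY => by
    have h1 := lee_formula hlc S.xi Y S.xi
    rw [hz _ _ _ S.xi_vertical hY S.xi_vertical, S.g_xi_phi, S.g_xi_phi, hlx, hxx,
      S.g_symm S.xi Y, ← S.eta_eq, S.acm_eta_xi] at h1
    linear_combination -h1
  have hpp : S.lee W = S.eta W * S.lee S.xi := by
    have h1 := key hW
    have h2 := key (S.v_phi_vertical hW)
    rw [S.acm_phi_phi, S.lee_add, S.lee_neg, S.lee_smul, S.eta_phi W] at h2
    linear_combination -h2 + S.eta (S.phi S.xi) * h1 +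
      (-S.lee W) * ha2
  have hxi : S.lee S.xi = 0 := by
    have hu := S.u_vertical ⟨0, hfib⟩
    have huu := S.u_orthonormal ⟨0, hfib⟩ ⟨0, hfib⟩
    have hup := S.u_phi_orth ⟨0, hfib⟩ ⟨0, hfib⟩
    have hue := S.u_eta ⟨0, hfib⟩
    generalize S.u ⟨0, hfib⟩ = u at hu huu hup hue
    rw [if_pos rfl] at huu
    have h1 := lee_formula hlc u (S.phi u) S.xi
    rw [hz _ _ _ hu (S.v_phi_vertical hu) S.xi_vertical, S.acm_phi_phi, hue, zero_smul, add_zero,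
      S.g_neg_right, huu, hup, S.phi_xi, S.g_smul_right, ← S.eta_eq, hue] at h1
    linear_combination -h1
  rw [hpp, hxi, mul_zero]

/-- The horizontal part of `(∇_U φ)W`, `W` being vertical, when the
Lee form vanishes on vertical fields; for `U` vertical too, this relates
`T_U(φW)` to `φ(T_U W)`. -/
lemma g_nabla_phi (hlc : S.LCCosymplectic) (hv : ∀ {W : V}, S.v W = W → S.lee W = 0)
    {U W Y : V} (hW : S.v W = W) (hY : S.v Y = 0) :
    S.g Y (S.nabla U (S.phi W)) + S.g (S.phi Y) (S.nabla U W)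
      = S.lee Y * S.g U (S.phi W) + S.lee (S.phi Y) * S.g U W := by
  have h1 := lee_formula hlc U Y W
  rw [hv hW, hv (S.v_phi_vertical hW), nablaPhi, S.g_sub_right, S.g_phi_right hY] at h1
  linear_combination h1

lemma g_nabla_pair (hlc : S.LCCosymplectic) (hv : ∀ {W : V}, S.v W = W → S.lee W = 0)
    {Y : V} (hY : S.v Y = 0) (i : Fin S.r) :
    S.g Y (S.nabla (S.u i) (S.u i)) + S.g Y (S.nabla (S.phi (S.u i)) (S.phi (S.u i)))
      = 2 * S.lee Y := by
  have hu := S.u_vertical i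
  have huu := S.u_orthonormal i i
  have hup := S.u_phi_orth i i
  have hue := S.u_eta i
  generalize S.u i = u at hu huu hup hue
  rw [if_pos rfl] at huu
  have h1 := g_nabla_phi (U := S.phi u) hlc hv hu hY
  have h2 := g_nabla_phi (U := u) hlc hv hu (S.v_phi_horizontal hY)
  rw [S.acm_compat, hue, huu, S.g_symm (S.phi u) u, hup,
    S.g_nabla_comm (S.v_phi_vertical hu) hu (S.v_phi_horizontal hY)] at h1
  rw [S.phi_phi_horizontal hY, S.lee_neg, S.g_neg_left, huu, hup] at h2
  linear_combination h1 - h2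

lemma g_nabla_xi (hlc : S.LCCosymplectic) (hv : ∀ {W : V}, S.v W = W → S.lee W = 0)
    {Y : V} (hY : S.v Y = 0) : S.g Y (S.nabla S.xi S.xi) = S.lee Y := by
  have ha2 := S.eta_phi_xi_sq
  have hxx : S.g S.xi S.xi = 1 := by rw [← S.eta_eq, S.acm_eta_xi]
  have key : ∀ {Z : V}, S.v Z = 0 →
      S.eta (S.phi S.xi) * S.g Z (S.nabla S.xi S.xi) + S.g (S.phi Z) (S.nabla S.xi S.xi)
        = S.lee Z * S.eta (S.phi S.xi) + S.lee (S.phi Z) := fun {Z} hZ => by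
    have h1 := g_nabla_phi (U := S.xi) hlc hv S.xi_vertical hZ
    rw [S.g_xi_phi, S.phi_xi, S.nabla_leibniz, S.g_add_right, S.g_smul_right, S.g_smul_right,
      ← S.eta_eq, S.eta_horizontal hZ, hxx, ← S.phi_xi, S.acm_eta_xi] at h1
    linear_combination h1
  have h1 := key hY
  have h2 := key (S.v_phi_horizontal hY)
  rw [S.phi_phi_horizontal hY, S.lee_neg, S.g_neg_left] at h2
  linear_combination -h2 + S.eta (S.phi S.xi) * h1
    + (S.lee Y - S.g Y (S.nabla S.xi S.xi)) * ha2

/-- The trace of `T` on the fibres is `2r + 1` times the horizontal part of the Lee vector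
field, as soon as the Lee form vanishes on vertical fields. -/
lemma g_meanCurv (hlc : S.LCCosymplectic) (hv : ∀ {W : V}, S.v W = W → S.lee W = 0)
    {Y : V} (hY : S.v Y = 0) : S.g Y S.meanCurv = (2 * (S.r : C) + 1) * S.lee Y := by
  have hT : ∀ {U : V}, S.v U = U → S.g Y (S.T U U) = S.g Y (S.nabla U U) := fun hU => by
    rw [S.T_vertical hU hU, S.g_horizontal_h hY]
  have hpair : ∀ i, S.g Y (S.T (S.u i) (S.u i) + S.T (S.phi (S.u i)) (S.phi (S.u i)))
      = 2 * S.lee Y := fun i => by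
    rw [S.g_add_right, hT (S.u_vertical i), hT (S.v_phi_vertical (S.u_vertical i)),
      g_nabla_pair hlc hv hY]
  rw [meanCurv, S.g_add_right, S.g_sum_right, hT S.xi_vertical, g_nabla_xi hlc hv hY,
    Finset.sum_congr rfl fun i _ => hpair i]
  simp only [Finset.sum_const, Finset.card_univ, Fintype.card_fin, nsmul_eq_mul]
  ring

lemma lee_eq_zero (hv : ∀ {W : V}, S.v W = W → S.lee W = 0)
    (hh : ∀ {Y : V}, S.v Y = 0 → S.lee Y = 0) (X : V) : S.lee X = 0 := by
  have hX : X = S.v X + S.h X := by rw [S.h_eq, add_sub_cancel]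
  rw [hX, S.lee_add, hv (S.v_idem X), hh (S.v_h X), add_zero]

lemma nablaPhi_eq_zero (hlc : S.LCCosymplectic) (hlee : ∀ X, S.lee X = 0) (X Z : V) :
    S.nablaPhi X Z = 0 := by
  refine S.eq_zero_of_g fun Y => ?_
  rw [lee_formula hlc]
  simp [hlee]

lemma lee_of_superminimal (hfib : 1 ≤ S.r) (hlc : S.LCCosymplectic) (hs : S.Superminimal) (X : V) :
    S.lee X = 0 := by
  have hv : ∀ {W : V}, S.v W = W → S.lee W = 0 := lee_vertical hfib hlc
    fun U W₁ W₂ hU _ _ => by rw [hs U W₂ hU, S.g_zero_right]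
  refine lee_eq_zero hv (fun {Y} hY => ?_) X
  -- the formula for `g(φY, (∇_u φ)u)`, since `φφY = -Y`
  have hu := S.u_vertical ⟨0, hfib⟩
  have huu := S.u_orthonormal ⟨0, hfib⟩ ⟨0, hfib⟩
  have hup := S.u_phi_orth ⟨0, hfib⟩ ⟨0, hfib⟩
  generalize S.u ⟨0, hfib⟩ = u at hu huu hup
  rw [if_pos rfl] at huu
  have h1 := lee_formula hlc u (S.phi Y) u
  rw [hs u u hu, S.g_zero_right, hv hu, hv (S.v_phi_vertical hu), huu, hup,
    S.phi_phi_horizontal hY, S.lee_neg] at h1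
  linear_combination h1

end CCSub

/-- Proposition 4.5: for a contact-complex Riemannian submersion
with dim M ≥ 5, dim M' ≥ 4, locally conformal cosymplectic total space and
fibres of dimension 2r+1, r ≥ 1, the following are equivalent:
(i) π has superminimal fibres;
(ii) each fibre is a minimal submanifold of M and inherits a cosymplectic
structure. -/
theorem statement17
    {C : Type} [CommRing C] [Algebra ℝ C] {V : Type} [AddCommGroup V] [Module C V]
    {C' : Type} [CommRing C'] [Algebra ℝ C'] {V' : Type} [AddCommGroup V'] [Module C' V']
    (S : CCSub C V C' V')
    (hdim : 2 ≤ S.m) (hdim' : 2 ≤ S.n) (hfib : 1 ≤ S.r)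
    (hlc : S.LCCosymplectic) :
    S.Superminimal ↔ (S.meanCurv = 0 ∧ S.FibreCosymplectic) := by
  constructor
  · intro hs
    have hlee := CCSub.lee_of_superminimal hfib hlc hs
    refine ⟨S.eq_zero_of_g fun Y => ?_, fun U W hU _ => ?_⟩
    · rw [← S.g_horizontal_h_meanCurv Y, CCSub.g_meanCurv hlc (fun _ => hlee _) (S.v_h Y), hlee,
        mul_zero]
    · rw [S.vNablaPhi_eq, hs U W hU, S.v_zero]
  · rintro ⟨hmin, hcos⟩ U E _
    have hv : ∀ {W : V}, S.v W = W → S.lee W = 0 := CCSub.lee_vertical hfib hlc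
      fun U W₁ W₂ hU h₁ h₂ => by
        rw [← S.g_vertical_v h₁, ← S.vNablaPhi_eq, hcos U W₂ hU h₂, S.g_zero_right]
    refine CCSub.nablaPhi_eq_zero hlc (CCSub.lee_eq_zero hv fun {Y} hY => ?_) U E
    have h1 := CCSub.g_meanCurv hlc hv hY
    rw [hmin, S.g_zero_right] at h1
    -- `2r + 1` is invertible in the `ℝ`-algebra `C`
    have hunit : IsUnit (2 * (S.r : C) + 1) := by
      have hr : IsUnit (2 * (S.r : ℝ) + 1) := IsUnit.mk0 _ (by positivity)
      simpa only [map_add, map_mul, map_ofNat, map_natCast, map_one]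
        using hr.map (algebraMap ℝ C)
    exact hunit.mul_right_eq_zero.mp h1.symm
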